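/- arXiv:1203.2208 — 2 statements merged into one kernel-verified Lean document; each statement's English description precedes it below -/
import Mathlib

section
/- For all real numbers 0 < p < ∞ and 0 < q < ∞ and integers 0 ≤ l ≤ k with l = 1/q − 1/p, there exists a constant C = C(k, p, q) > 0 such that for every integer n ≥ max(k, 2) and every polynomial P ∈ Δ_n^{(k)}, one has ‖P^{(l)}‖_{L_q[−1,1]} ≤ C · (log n)^l · ‖P‖_{L_p[−1,1]}. -/
open Polynomial MeasureTheory

/-- The `L_q` quasinorm of `f` on `[a,b]` for `0 < q < ∞`. -/
noncomputable def LqNorm (f : ℝ → ℝ) (q a b : ℝ) : ℝ :=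
  (∫ x in a..b, |f x| ^ q) ^ (1 / q)

/-- The sup norm of `f` on `[a,b]`. -/
noncomputable def LinfNorm (f : ℝ → ℝ) (a b : ℝ) : ℝ :=
  sSup ((fun x => |f x|) '' Set.Icc a b)

/-- The `L_q` norm on `[a,b]` for `0 < q ≤ ∞`, `q : ℝ≥0∞`. -/
noncomputable def Lnorm (f : ℝ → ℝ) (q : ENNReal) (a b : ℝ) : ℝ :=
  if q = ⊤ then LinfNorm f a b else LqNorm f q.toReal a b

/-- `P ∈ Δ_n^(k)`: a real polynomial of degree at most `n` all of whose derivatives of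
order `0 ≤ m ≤ k` are nonnegative on `[-1,1]`. -/
def AbsMono (P : Polynomial ℝ) (n k : ℕ) : Prop :=
  P.natDegree ≤ n ∧
    ∀ m ≤ k, ∀ x ∈ Set.Icc (-1 : ℝ) 1, 0 ≤ (derivative^[m] P).eval x

/-- Jensen's inequality for the concave power `t ↦ t ^ q` on an interval. -/
lemma intervalIntegral_rpow_le {f : ℝ → ℝ} {a b q : ℝ} (hab : a < b) (hq : 0 < q) (hq1 : q ≤ 1)
    (hf : Continuous f) (hpos : ∀ x ∈ Set.Icc a b, 0 ≤ f x) :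
    ∫ x in a..b, f x ^ q ≤ (∫ x in a..b, f x) ^ q * (b - a) ^ (1 - q) := by
  have hd : 0 < b - a := sub_pos.2 hab
  have hI : 0 ≤ ∫ x in a..b, f x := intervalIntegral.integral_nonneg hab.le hpos
  have hcont : Continuous fun x => f x ^ q := hf.rpow_const fun _ => Or.inr hq.le
  have key := (Real.concaveOn_rpow hq.le hq1).le_map_set_average (μ := volume)
    (t := Set.Ioc a b) (f := f)
    (Real.continuous_rpow_const hq.le).continuousOn isClosed_Ici
    (by simp [hab]) (by simp)
    (by
      filter_upwards [ae_restrict_mem measurableSet_Ioc] with x hx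
      exact hpos x (Set.Ioc_subset_Icc_self hx))
    (hf.integrableOn_Ioc) (hcont.integrableOn_Ioc)
  rw [setAverage_eq, setAverage_eq, ← intervalIntegral.integral_of_le hab.le,
    ← intervalIntegral.integral_of_le hab.le] at key
  simp only [Real.volume_real_Ioc_of_le hab.le, smul_eq_mul] at key
  rw [Real.mul_rpow (inv_nonneg.2 hd.le) hI, Real.inv_rpow hd.le, inv_mul_le_iff₀ hd] at key
  rw [Real.rpow_sub hd, Real.rpow_one]
  calc _ ≤ _ := key
    _ = _ := by ring

/-- A polynomial that is nonnegative and nondecreasing on `[-1, 1]` loses at most a constant factor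
when moving a distance of order `n⁻²` away from the right endpoint. -/
lemma eval_one_le_cosh_mul_eval {P : ℝ[X]} {n : ℕ} (hn : 1 ≤ n) (hdeg : P.natDegree ≤ n)
    (hpos : ∀ x ∈ Set.Icc (-1 : ℝ) 1, 0 ≤ P.eval x)
    (hmono : MonotoneOn (fun x => P.eval x) (Set.Icc (-1 : ℝ) 1))
    {h : ℝ} (h0 : 0 ≤ h) (hh : h ≤ 1 / (3 * (n : ℝ) ^ 2)) :
    P.eval 1 ≤ Real.cosh 1 * P.eval (1 - h) := by
  have hn' : (1 : ℝ) ≤ n := by exact_mod_cast hn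
  set y := Real.cosh (1 / n) with hy
  have hy1 : 1 + 1 / (2 * (n : ℝ) ^ 2) ≤ y := by
    have h1 : 1 / (2 * (n : ℝ)) ≤ Real.sinh (1 / (2 * n)) :=
      Real.self_le_sinh_iff.2 (by positivity)
    have h2 : y = 1 + 2 * Real.sinh (1 / (2 * n)) ^ 2 := by
      rw [hy, show (1 : ℝ) / n = 2 * (1 / (2 * n)) by field_simp, Real.cosh_two_mul,
        Real.cosh_sq]
      ring
    calc 1 + 1 / (2 * (n : ℝ) ^ 2) = 1 + 2 * (1 / (2 * (n : ℝ))) ^ 2 := by field_simp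
      _ ≤ 1 + 2 * Real.sinh (1 / (2 * n)) ^ 2 := by gcongr
      _ = y := h2.symm
  have hy2 : y ≤ 2 := by
    have h1 : y ≤ Real.cosh 1 := by
      rw [hy, Real.cosh_le_cosh, abs_of_nonneg (by positivity), abs_one]
      exact (div_le_one (by linarith)).2 hn'
    have h2 : Real.cosh 1 ≤ 2 := by
      have e1 := Real.exp_one_lt_d9
      have e2 : Real.exp (-1) ≤ 1 := Real.exp_le_one_iff.2 (by norm_num)
      rw [Real.cosh_eq]
      linarith
    exact h1.trans h2
  have hsq : 0 < 1 / (2 * (n : ℝ) ^ 2) := by positivity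
  have hy1' : 1 < y := by linarith
  set b := 1 - h with hb
  have hn2 : 1 / (3 * (n : ℝ) ^ 2) ≤ 1 / 3 := by
    apply one_div_le_one_div_of_le (by norm_num)
    nlinarith
  have hbI : b ∈ Set.Icc (-1 : ℝ) 1 := ⟨by rw [hb]; linarith, by rw [hb]; linarith⟩
  -- the affine map with `-1 ↦ -1` and `y ↦ 1`
  set s := 2 / (y + 1) with hs
  have hs0 : 0 < s := by positivity
  have hs1 : s * (y + 1) = 2 := by rw [hs]; field_simp
  have hsb : 2 * s - 1 ≤ b := by
    have h3 : h * (y + 1) ≤ 2 * (y - 1) := by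
      have e : 1 / (2 * (n : ℝ) ^ 2) = 3 / 2 * (1 / (3 * (n : ℝ) ^ 2)) := by field_simp
      have e3 : h * (y + 1) ≤ h * 3 := mul_le_mul_of_nonneg_left (by linarith) h0
      linarith
    have : h ≤ 2 * (y - 1) / (y + 1) := (le_div_iff₀ (by linarith)).2 h3
    have e2 : 2 * (y - 1) / (y + 1) = 2 - 2 * s := by rw [hs]; field_simp; ring
    rw [hb]; linarith
  have hbound : ∀ z ∈ Set.Icc (-1 : ℝ) 1, 0 ≤ P.eval (s * (z + 1) - 1) ∧
      P.eval (s * (z + 1) - 1) ≤ P.eval b := by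
    intro z hz
    have h1 : 0 ≤ s * (z + 1) := mul_nonneg hs0.le (by linarith [hz.1])
    have h2 : s * (z + 1) - 1 ≤ b := by nlinarith [hz.2]
    have hm : s * (z + 1) - 1 ∈ Set.Icc (-1 : ℝ) 1 := ⟨by linarith, h2.trans hbI.2⟩
    exact ⟨hpos _ hm, hmono hm hbI h2⟩
  have main : ∀ M, 0 < M → P.eval b ≤ M → P.eval 1 ≤ M * Real.cosh 1 := by
    intro M hM hbM
    set Q : ℝ[X] := C M⁻¹ * P.comp (C s * (X + 1) - 1) with hQ
    have hQe : ∀ z, Q.eval z = M⁻¹ * P.eval (s * (z + 1) - 1) := by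
      intro z; simp [hQ]
    have hQd : Q.degree ≤ n := by
      apply degree_le_of_natDegree_le
      have hl : (C s * (X + 1) - 1 : ℝ[X]).natDegree ≤ 1 := by compute_degree
      calc Q.natDegree ≤ (P.comp (C s * (X + 1) - 1)).natDegree := natDegree_C_mul_le _ _
        _ ≤ P.natDegree * (C s * (X + 1) - 1 : ℝ[X]).natDegree := natDegree_comp_le
        _ ≤ n * 1 := Nat.mul_le_mul hdeg hl
        _ = n := mul_one n
    have := Chebyshev.eval_iterate_derivative_le_of_forall_abs_le_one (k := 0) hy1'.le hQd
      (by
        intro z hz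
        obtain ⟨h1, h2⟩ := hbound z hz
        rw [hQe, abs_of_nonneg (by positivity), inv_mul_le_iff₀ hM]
        linarith)
    simp only [Function.iterate_zero, id_eq, hQe] at this
    rw [hs1, hy, Chebyshev.T_real_cosh, inv_mul_le_iff₀ hM, Int.cast_natCast,
      mul_one_div_cancel (by positivity)] at this
    norm_num at this
    exact this
  have hlim : ∀ ε > 0, P.eval 1 ≤ Real.cosh 1 * P.eval b + ε := by
    intro ε hε
    have hc : 0 < Real.cosh 1 := Real.cosh_pos 1
    have := main (P.eval b + ε / Real.cosh 1)
      (add_pos_of_nonneg_of_pos (hpos b hbI) (by positivity)) (by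
        have : 0 < ε / Real.cosh 1 := by positivity
        linarith)
    calc P.eval 1 ≤ _ := this
      _ = _ := by field_simp
  exact le_of_forall_pos_le_add hlim

/-- A power-mean bound for finite sums of concave powers. -/
lemma sum_rpow_le_card_rpow_mul {N : ℕ} (hN : 0 < N) {a : ℕ → ℝ} (ha : ∀ j, 0 ≤ a j) {r : ℝ}
    (hr : 0 < r) (hr1 : r ≤ 1) :
    ∑ j ∈ Finset.range N, a j ^ r ≤
      (N : ℝ) ^ (1 - r) * (∑ j ∈ Finset.range N, a j) ^ r := by
  have hN' : (0 : ℝ) < N := by exact_mod_cast hN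
  have key := (Real.concaveOn_rpow hr.le hr1).le_map_sum (t := Finset.range N)
    (w := fun _ => (N : ℝ)⁻¹) (p := a) (fun _ _ => by positivity)
    (by simp [hN'.ne']) (fun j _ => ha j)
  simp only [smul_eq_mul, ← Finset.mul_sum] at key
  rw [Real.mul_rpow (by positivity) (Finset.sum_nonneg fun j _ => ha j), Real.inv_rpow hN'.le,
    inv_mul_le_iff₀ hN'] at key
  rw [Real.rpow_sub hN', Real.rpow_one]
  calc _ ≤ _ := key
    _ = _ := by ring

/-- On an interval, the integral of `(P')^q` is controlled by the value of `P` at the right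
endpoint. -/
lemma integral_derivative_rpow_le {P : ℝ[X]} {p q a b : ℝ} (hp : 0 < p) (hq : 0 < q)
    (hpq : 1 / q = 1 / p + 1) (hab : a < b) (hPa : 0 ≤ P.eval a)
    (hP' : ∀ x ∈ Set.Icc a b, 0 ≤ (derivative P).eval x) :
    ∫ x in a..b, (derivative P).eval x ^ q ≤ (P.eval b ^ p * (b - a)) ^ (q / p) := by
  have hqp : 1 - q = q / p := by field_simp at hpq ⊢; linarith
  have hq1 : q ≤ 1 := by
    have : 0 < q / p := by positivity
    linarith
  have hftc : ∫ x in a..b, (derivative P).eval x = P.eval b - P.eval a :=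
    intervalIntegral.integral_eq_sub_of_hasDerivAt (fun x _ => P.hasDerivAt x)
      ((derivative P).continuous.intervalIntegrable _ _)
  have hi : 0 ≤ ∫ x in a..b, (derivative P).eval x :=
    intervalIntegral.integral_nonneg hab.le hP'
  have hPb : 0 ≤ P.eval b := by linarith
  calc _ ≤ (∫ x in a..b, (derivative P).eval x) ^ q * (b - a) ^ (1 - q) :=
        intervalIntegral_rpow_le hab hq hq1 (derivative P).continuous hP'
    _ ≤ P.eval b ^ q * (b - a) ^ (1 - q) := by
        have : 0 ≤ b - a := by linarith
        gcongr
        linarith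
    _ = _ := by
        rw [Real.mul_rpow (by positivity) (by linarith), ← Real.rpow_mul hPb, hqp]
        congr 2
        field_simp

lemma monotoneOn_eval_of_derivative_nonneg {P : ℝ[X]}
    (hP' : ∀ x ∈ Set.Icc (-1 : ℝ) 1, 0 ≤ (derivative P).eval x) :
    MonotoneOn (fun x => P.eval x) (Set.Icc (-1 : ℝ) 1) :=
  monotoneOn_of_deriv_nonneg (convex_Icc _ _) P.continuous.continuousOn
    P.differentiable.differentiableOn fun x hx => by
      rw [P.deriv]
      exact hP' x (interior_subset hx)

lemma rpow_mul_sub_le_integral_rpow {f : ℝ → ℝ} {a b p : ℝ} (hp : 0 < p) (hab : a ≤ b)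
    (hf : Continuous f) (hfa : 0 ≤ f a) (hle : ∀ x ∈ Set.Icc a b, f a ≤ f x) :
    f a ^ p * (b - a) ≤ ∫ x in a..b, f x ^ p := by
  have h := intervalIntegral.integral_mono_on (f := fun _ => f a ^ p) (μ := volume) hab
    intervalIntegrable_const
    ((hf.rpow_const fun _ => Or.inr hp.le).intervalIntegrable a b)
    (fun x hx => Real.rpow_le_rpow hfa (hle x hx) hp.le)
  rw [intervalIntegral.integral_const, smul_eq_mul, mul_comm] at h
  exact h

/-- The points `1 - 2 ^ (1 - j)`, accumulating geometrically at `1`. -/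
noncomputable def dyadicPoint (j : ℕ) : ℝ := 1 - 2 * (1 / 2) ^ j

lemma dyadicPoint_zero : dyadicPoint 0 = -1 := by norm_num [dyadicPoint]

lemma dyadicPoint_sub (j : ℕ) : dyadicPoint (j + 1) - dyadicPoint j = (1 / 2) ^ j := by
  simp only [dyadicPoint, pow_succ]; ring

lemma dyadicPoint_lt_succ (j : ℕ) : dyadicPoint j < dyadicPoint (j + 1) := by
  have : (0 : ℝ) < (1 / 2) ^ j := by positivity
  linarith [dyadicPoint_sub j]

lemma dyadicPoint_mem (j : ℕ) : dyadicPoint j ∈ Set.Icc (-1 : ℝ) 1 := by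
  have h1 : (0 : ℝ) < (1 / 2) ^ j := by positivity
  have h2 : ((1 : ℝ) / 2) ^ j ≤ 1 := pow_le_one₀ (by norm_num) (by norm_num)
  constructor <;> simp only [dyadicPoint] <;> linarith

lemma integral_derivative_rpow_dyadic_le {P : ℝ[X]} {p q : ℝ} (hp : 0 < p) (hq : 0 < q)
    (hpq : 1 / q = 1 / p + 1) (hP : ∀ x ∈ Set.Icc (-1 : ℝ) 1, 0 ≤ P.eval x)
    (hP' : ∀ x ∈ Set.Icc (-1 : ℝ) 1, 0 ≤ (derivative P).eval x) (j : ℕ) :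
    ∫ x in dyadicPoint j..dyadicPoint (j + 1), (derivative P).eval x ^ q ≤
      2 ^ (q / p) *
        (∫ x in dyadicPoint (j + 1)..dyadicPoint (j + 2), P.eval x ^ p) ^ (q / p) := by
  have hmono := monotoneOn_eval_of_derivative_nonneg hP'
  have hm := dyadicPoint_mem
  have hsub : ∀ i, Set.Icc (dyadicPoint i) (dyadicPoint (i + 1)) ⊆ Set.Icc (-1 : ℝ) 1 := fun i =>
    Set.Icc_subset_Icc (hm i).1 (hm (i + 1)).2
  have h1 := integral_derivative_rpow_le hp hq hpq (dyadicPoint_lt_succ j) (hP _ (hm j))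
    (fun x hx => hP' x (hsub j hx))
  have h2 := rpow_mul_sub_le_integral_rpow hp (dyadicPoint_lt_succ (j + 1)).le P.continuous
    (hP _ (hm (j + 1))) (fun x hx => hmono (hm (j + 1)) (hsub (j + 1) hx) hx.1)
  rw [dyadicPoint_sub] at h1 h2
  have hpos : 0 ≤ P.eval (dyadicPoint (j + 1)) := hP _ (hm (j + 1))
  have h3 : 0 ≤ P.eval (dyadicPoint (j + 1)) ^ p * (1 / 2) ^ (j + 1) := by positivity
  rw [← Real.mul_rpow (by norm_num) (h3.trans h2)]
  refine h1.trans (Real.rpow_le_rpow (by positivity) ?_ (by positivity))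
  rw [pow_succ] at h2
  linarith

/-- The number of dyadic points, of order `log n`, needed to come within `O(n⁻²)` of `1`. -/
lemma exists_dyadic_depth {n : ℕ} (hn : 2 ≤ n) :
    ∃ N : ℕ, 0 < N ∧ (N : ℝ) ≤ 7 / Real.log 2 * Real.log n ∧
      2 * (1 / 2 : ℝ) ^ N ≤ 1 / (3 * (n : ℝ) ^ 2) := by
  have hl2 : 0 < Real.log 2 := Real.log_pos (by norm_num)
  have hn0 : (0 : ℝ) < n := by exact_mod_cast (by omega : 0 < n)
  refine ⟨5 + 2 * Nat.log 2 n, by omega, ?_, ?_⟩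
  · have h1 : ((2 ^ Nat.log 2 n : ℕ) : ℝ) ≤ n := by
      exact_mod_cast Nat.pow_log_le_self 2 (by omega)
    have h2 := Real.log_le_log (by positivity) h1
    push_cast at h2
    rw [Real.log_pow] at h2
    have h3 : Real.log 2 ≤ Real.log n := Real.log_le_log (by norm_num) (by exact_mod_cast hn)
    rw [div_mul_eq_mul_div, le_div_iff₀ hl2]
    push_cast
    linarith
  · have h1 : (n : ℝ) ≤ 2 ^ (Nat.log 2 n + 1) := by
      exact_mod_cast (Nat.lt_pow_succ_log_self (by norm_num) n).le
    have h2 : (n : ℝ) ^ 2 ≤ (2 ^ (Nat.log 2 n + 1)) ^ 2 := by gcongr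
    have h4 : (2 : ℝ) ^ (5 + 2 * Nat.log 2 n) = 8 * (2 ^ (Nat.log 2 n + 1)) ^ 2 := by ring
    rw [one_div_pow, h4, mul_one_div, div_le_div_iff₀ (by positivity) (by positivity)]
    generalize ((2 : ℝ) ^ (Nat.log 2 n + 1)) ^ 2 = t at h2
    nlinarith [sq_nonneg (n : ℝ)]

/-- The first-order inequality: `‖P'‖_q ≤ C log n ‖P‖_p` when `1 / q = 1 / p + 1`. -/
lemma exists_LqNorm_derivative_le {p q : ℝ} (hp : 0 < p) (hq : 0 < q) (hpq : 1 / q = 1 / p + 1) :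
    ∃ C : ℝ, 0 < C ∧ ∀ n : ℕ, 2 ≤ n → ∀ P : ℝ[X], AbsMono P n 1 →
      LqNorm (fun x => (derivative P).eval x) q (-1) 1 ≤
        C * Real.log n * LqNorm (fun x => P.eval x) p (-1) 1 := by
  have hl2 : 0 < Real.log 2 := Real.log_pos (by norm_num)
  have hqp : 1 - q / p = q := by field_simp at hpq ⊢; linarith
  have hqp0 : 0 < q / p := by positivity
  have hcosh : 0 < Real.cosh 1 := Real.cosh_pos 1
  set K : ℝ := 2 ^ (q / p) * (1 + (Real.cosh 1 ^ p) ^ (q / p)) with hK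
  have hK0 : 0 < K := by positivity
  refine ⟨K ^ (1 / q) * (7 / Real.log 2), by positivity, fun n hn P hP => ?_⟩
  obtain ⟨hdeg, hder⟩ := hP
  have hP0 : ∀ x ∈ Set.Icc (-1 : ℝ) 1, 0 ≤ P.eval x := hder 0 zero_le_one
  have hP1 : ∀ x ∈ Set.Icc (-1 : ℝ) 1, 0 ≤ (derivative P).eval x := hder 1 le_rfl
  have hmono := monotoneOn_eval_of_derivative_nonneg hP1
  obtain ⟨N, hN0, hNlog, hNn⟩ := exists_dyadic_depth hn
  have hm := dyadicPoint_mem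
  have hIcc : Set.uIcc (-1 : ℝ) 1 = Set.Icc (-1) 1 := Set.uIcc_of_le (by norm_num)
  have hcd : Continuous fun x => (derivative P).eval x ^ q :=
    (derivative P).continuous.rpow_const fun _ => Or.inr hq.le
  have hcp : Continuous fun x => P.eval x ^ p :=
    P.continuous.rpow_const fun _ => Or.inr hp.le
  have e1 : ∫ x in (-1 : ℝ)..1, |(derivative P).eval x| ^ q =
      ∫ x in (-1 : ℝ)..1, (derivative P).eval x ^ q :=
    intervalIntegral.integral_congr fun x hx => by
      simp only [abs_of_nonneg (hP1 x (hIcc ▸ hx))]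
  have e2 : ∫ x in (-1 : ℝ)..1, |P.eval x| ^ p = ∫ x in (-1 : ℝ)..1, P.eval x ^ p :=
    intervalIntegral.integral_congr fun x hx => by
      simp only [abs_of_nonneg (hP0 x (hIcc ▸ hx))]
  simp only [LqNorm, e1, e2]
  set S := ∫ x in (-1 : ℝ)..1, P.eval x ^ p with hS
  have hsubint : ∀ a b, -1 ≤ a → a ≤ b → b ≤ 1 → ∫ x in a..b, P.eval x ^ p ≤ S := by
    intro a b ha hab hb
    refine intervalIntegral.integral_mono_interval ha hab hb ?_ (hcp.intervalIntegrable _ _)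
    filter_upwards [ae_restrict_mem measurableSet_Ioc] with x hx
    exact Real.rpow_nonneg (hP0 x (Set.Ioc_subset_Icc_self hx)) _
  have hA0 : ∀ j, 0 ≤ ∫ x in dyadicPoint (j + 1)..dyadicPoint (j + 2), P.eval x ^ p := fun j =>
    intervalIntegral.integral_nonneg (dyadicPoint_lt_succ (j + 1)).le fun x hx =>
      Real.rpow_nonneg (hP0 x ⟨(hm _).1.trans hx.1, hx.2.trans (hm _).2⟩) _
  have hS0 : 0 ≤ S := (hA0 0).trans
    (hsubint _ _ (hm _).1 (dyadicPoint_lt_succ _).le (hm _).2)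
  have hsumA : ∑ j ∈ Finset.range N, ∫ x in dyadicPoint (j + 1)..dyadicPoint (j + 2),
      P.eval x ^ p ≤ S := by
    rw [intervalIntegral.sum_integral_adjacent_intervals (a := fun j => dyadicPoint (j + 1))
      fun k _ => hcp.intervalIntegrable _ _]
    exact hsubint _ _ (hm _).1
      ((strictMono_nat_of_lt_succ dyadicPoint_lt_succ).monotone (by omega)) (hm _).2
  have hfirst : ∫ x in (-1 : ℝ)..dyadicPoint N, (derivative P).eval x ^ q ≤
      2 ^ (q / p) * ((N : ℝ) ^ q * S ^ (q / p)) := by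
    rw [← dyadicPoint_zero, ← intervalIntegral.sum_integral_adjacent_intervals
      fun k _ => hcd.intervalIntegrable _ _]
    calc _ ≤ ∑ j ∈ Finset.range N, 2 ^ (q / p) *
          (∫ x in dyadicPoint (j + 1)..dyadicPoint (j + 2), P.eval x ^ p) ^ (q / p) :=
          Finset.sum_le_sum fun j _ => integral_derivative_rpow_dyadic_le hp hq hpq hP0 hP1 j
      _ ≤ 2 ^ (q / p) * ((N : ℝ) ^ (1 - q / p) * (∑ j ∈ Finset.range N,
          ∫ x in dyadicPoint (j + 1)..dyadicPoint (j + 2), P.eval x ^ p) ^ (q / p)) := by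
          rw [← Finset.mul_sum]
          gcongr
          exact sum_rpow_le_card_rpow_mul hN0 hA0 hqp0 (by linarith)
      _ ≤ _ := by
          rw [hqp]
          gcongr
          exact Finset.sum_nonneg fun j _ => hA0 j
  have hlast : ∫ x in dyadicPoint N..1, (derivative P).eval x ^ q ≤
      (Real.cosh 1 ^ p) ^ (q / p) * S ^ (q / p) := by
    have hlt : dyadicPoint N < 1 := (dyadicPoint_lt_succ N).trans_le (hm _).2
    have hsub : Set.Icc (dyadicPoint N) 1 ⊆ Set.Icc (-1 : ℝ) 1 :=
      Set.Icc_subset_Icc_left (hm N).1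
    have h1 := integral_derivative_rpow_le hp hq hpq hlt (hP0 _ (hm N))
      (fun x hx => hP1 x (hsub hx))
    have h2 := rpow_mul_sub_le_integral_rpow hp hlt.le P.continuous (hP0 _ (hm N))
      (fun x hx => hmono (hm N) (hsub hx) hx.1)
    have h3 : P.eval 1 ≤ Real.cosh 1 * P.eval (dyadicPoint N) :=
      eval_one_le_cosh_mul_eval (by omega) hdeg hP0 hmono (by positivity) hNn
    have hp1 : 0 ≤ P.eval 1 := hP0 1 (by norm_num)
    have hpN := hP0 _ (hm N)
    have hd : 0 ≤ 1 - dyadicPoint N := by linarith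
    rw [← Real.mul_rpow (by positivity) hS0]
    refine h1.trans (Real.rpow_le_rpow (by positivity) ?_ hqp0.le)
    calc P.eval 1 ^ p * (1 - dyadicPoint N)
        ≤ (Real.cosh 1 * P.eval (dyadicPoint N)) ^ p * (1 - dyadicPoint N) := by gcongr
      _ = Real.cosh 1 ^ p * (P.eval (dyadicPoint N) ^ p * (1 - dyadicPoint N)) := by
          rw [Real.mul_rpow hcosh.le hpN, mul_assoc]
      _ ≤ Real.cosh 1 ^ p * S := by
          gcongr
          exact h2.trans (hsubint _ _ (hm N).1 hlt.le le_rfl)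
  have hN1 : (1 : ℝ) ≤ (N : ℝ) ^ q := Real.one_le_rpow (by exact_mod_cast hN0) hq.le
  have htotal : ∫ x in (-1 : ℝ)..1, (derivative P).eval x ^ q ≤
      K * ((N : ℝ) ^ q * S ^ (q / p)) := by
    rw [← intervalIntegral.integral_add_adjacent_intervals (hcd.intervalIntegrable _ _)
      (hcd.intervalIntegrable (dyadicPoint N) _)]
    have h2 : (1 : ℝ) ≤ 2 ^ (q / p) := Real.one_le_rpow (by norm_num) hqp0.le
    have hSr : 0 ≤ S ^ (q / p) := by positivity
    have hc : 0 ≤ (Real.cosh 1 ^ p) ^ (q / p) := by positivity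
    have h3 : S ^ (q / p) ≤ 2 ^ (q / p) * ((N : ℝ) ^ q * S ^ (q / p)) := by
      rw [← mul_assoc]
      exact le_mul_of_one_le_left hSr (one_le_mul_of_one_le_of_one_le h2 hN1)
    calc _ ≤ _ := add_le_add hfirst hlast
      _ ≤ 2 ^ (q / p) * ((N : ℝ) ^ q * S ^ (q / p)) + (Real.cosh 1 ^ p) ^ (q / p) *
          (2 ^ (q / p) * ((N : ℝ) ^ q * S ^ (q / p))) := by gcongr
      _ = _ := by rw [hK]; ring
  have hint0 : 0 ≤ ∫ x in (-1 : ℝ)..1, (derivative P).eval x ^ q :=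
    intervalIntegral.integral_nonneg (by norm_num) fun x hx => Real.rpow_nonneg (hP1 x hx) _
  calc _ ≤ (K * ((N : ℝ) ^ q * S ^ (q / p))) ^ (1 / q) :=
        Real.rpow_le_rpow hint0 htotal (by positivity)
    _ = K ^ (1 / q) * N * S ^ (1 / p) := by
        rw [Real.mul_rpow hK0.le (by positivity), Real.mul_rpow (x := (N : ℝ) ^ q) (by positivity)
          (by positivity), ← Real.rpow_mul N.cast_nonneg, ← Real.rpow_mul hS0,
          mul_one_div_cancel hq.ne', Real.rpow_one, mul_assoc]
        congr 3
        field_simp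
    _ ≤ K ^ (1 / q) * (7 / Real.log 2 * Real.log n) * S ^ (1 / p) := by gcongr
    _ = _ := by ring

lemma AbsMono.mono {P : ℝ[X]} {n k l : ℕ} (h : AbsMono P n k) (hlk : l ≤ k) : AbsMono P n l :=
  ⟨h.1, fun m hm => h.2 m (hm.trans hlk)⟩

lemma AbsMono.derivative {P : ℝ[X]} {n k : ℕ} (h : AbsMono P n (k + 1)) :
    AbsMono (Polynomial.derivative P) n k :=
  ⟨(natDegree_derivative_le P).trans ((Nat.sub_le _ _).trans h.1), fun m hm =>
    h.2 (m + 1) (Nat.succ_le_succ hm)⟩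

lemma exists_LqNorm_iterate_derivative_le (l : ℕ) : ∀ p q : ℝ, 0 < p → 0 < q →
    (l : ℝ) = 1 / q - 1 / p →
    ∃ C : ℝ, 0 < C ∧ ∀ n : ℕ, 2 ≤ n → ∀ P : ℝ[X], AbsMono P n l →
      LqNorm (fun x => (derivative^[l] P).eval x) q (-1) 1 ≤
        C * Real.log n ^ l * LqNorm (fun x => P.eval x) p (-1) 1 := by
  induction l with
  | zero =>
    intro p q hp hq h
    have hpq : q = p := by
      have : 1 / q = 1 / p := by push_cast at h; linarith
      simpa using this
    exact ⟨1, one_pos, fun n _ P _ => by simp [hpq]⟩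
  | succ l ih =>
    intro p q hp hq h
    push_cast at h
    have hr : 0 < 1 / p + 1 := by positivity
    obtain ⟨C₁, hC₁, h₁⟩ := exists_LqNorm_derivative_le (p := p) (q := 1 / (1 / p + 1)) hp
      (by positivity) (one_div_one_div _)
    obtain ⟨C₂, hC₂, h₂⟩ := ih (1 / (1 / p + 1)) q (by positivity) hq
      (by rw [one_div_one_div]; linarith)
    refine ⟨C₂ * C₁, by positivity, fun n hn P hP => ?_⟩
    have hlog : 0 ≤ Real.log n := Real.log_natCast_nonneg n
    calc _ ≤ C₂ * Real.log n ^ l *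
          LqNorm (fun x => (derivative P).eval x) (1 / (1 / p + 1)) (-1) 1 :=
          h₂ n hn _ hP.derivative
      _ ≤ C₂ * Real.log n ^ l * (C₁ * Real.log n * LqNorm (fun x => P.eval x) p (-1) 1) := by
          gcongr
          exact h₁ n hn P (hP.mono (by omega))
      _ = _ := by ring

/-- Constrained Markov–Nikolskii inequality, critical case `l = 1/q - 1/p`. -/
theorem stmt1 (p q : ℝ) (hp : 0 < p) (hq : 0 < q) (k l : ℕ) (hlk : l ≤ k)
    (hl : (l : ℝ) = 1 / q - 1 / p) :
    ∃ C : ℝ, 0 < C ∧ ∀ n : ℕ, max k 2 ≤ n → ∀ P : Polynomial ℝ, AbsMono P n k →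
      LqNorm (fun x => (derivative^[l] P).eval x) q (-1) 1 ≤
        C * (Real.log n) ^ l * LqNorm (fun x => P.eval x) p (-1) 1 := by
  obtain ⟨C, hC, h⟩ := exists_LqNorm_iterate_derivative_le l p q hp hq hl
  exact ⟨C, hC, fun n hn P hP => h n ((le_max_right k 2).trans hn) P (hP.mono hlk)⟩
end

section
/- For all real numbers 0 < p < ∞ and 0 < q ≤ ∞ and integers 0 ≤ l ≤ k with l > 1/q − 1/p (with the convention 1/∞ = 0), there exist a constant c = c(k, p, q) > 0 and an integer N = N(k, p, q) such that for every integer n ≥ N there exists a polynomial P ∈ Δ_n^{(k)} with ‖P‖_{L_p[−1,1]} > 0 and ‖P^{(l)}‖_{L_q[−1,1]} ≥ c · n^{2l + 2/p − 2/q} · ‖P‖_{L_p[−1,1]}. -/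
open Polynomial MeasureTheory

/-- Every real polynomial has a polynomial antiderivative vanishing at a given point. -/
theorem Polynomial.exists_derivative_eq (Q : ℝ[X]) (x₀ : ℝ) :
    ∃ R : ℝ[X], derivative R = Q ∧ R.eval x₀ = 0 ∧ R.natDegree ≤ Q.natDegree + 1 := by
  set S : ℝ[X] := ∑ i ∈ Finset.range (Q.natDegree + 1),
    C (Q.coeff i / ((i : ℝ) + 1)) * X ^ (i + 1) with hS
  refine ⟨S - C (S.eval x₀), ?_, by simp, ?_⟩
  · rw [derivative_sub, derivative_C, sub_zero, hS, derivative_sum]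
    conv_rhs => rw [Q.as_sum_range_C_mul_X_pow]
    refine Finset.sum_congr rfl fun i _ => ?_
    rw [derivative_C_mul_X_pow, Nat.add_sub_cancel, Nat.cast_add, Nat.cast_one,
      div_mul_cancel₀ _ (by positivity)]
  · rw [natDegree_sub_C]
    refine natDegree_sum_le_of_forall_le _ _ fun i hi => (natDegree_C_mul_X_pow_le _ _).trans ?_
    have := Finset.mem_range.mp hi
    omega

/-- `R` is nonnegative on `[-1,1]`, decays like `C (1 - x + δ)⁻ˢ` away from the endpoint `1`, and
is at least `c δ⁻ˢ` on `[1 - aδ, 1]`. -/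
structure EndpointPeak (R : ℝ[X]) (δ : ℝ) (s : ℕ) (C c a : ℝ) : Prop where
  nonneg : ∀ x ∈ Set.Icc (-1 : ℝ) 1, 0 ≤ R.eval x
  upper : ∀ x ∈ Set.Icc (-1 : ℝ) 1, R.eval x * (1 - x + δ) ^ s ≤ C
  lower : ∀ x ∈ Set.Icc (1 - a * δ) 1, c ≤ δ ^ s * R.eval x

theorem EndpointPeak.mono {R : ℝ[X]} {δ : ℝ} {s : ℕ} {C c a c' a' : ℝ}
    (h : EndpointPeak R δ s C c a) (hδ : 0 < δ) (hc : c' ≤ c) (ha : a' ≤ a) :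
    EndpointPeak R δ s C c' a' where
  nonneg := h.nonneg
  upper := h.upper
  lower x hx := hc.trans (h.lower x ⟨by nlinarith [hx.1], hx.2⟩)

/-- Integrating a peak from `-1` lowers its order by one. -/
theorem EndpointPeak.exists_antiderivative {Q : ℝ[X]} {δ : ℝ} {s : ℕ} {C c a : ℝ}
    (h : EndpointPeak Q δ (s + 1) C c a) (hs : 1 ≤ s) (hδ : 0 < δ) (hδ1 : δ ≤ 1)
    (hC : 0 ≤ C) (hc : 0 ≤ c) (ha : 0 < a) (ha1 : a ≤ 1) :
    ∃ R : ℝ[X], derivative R = Q ∧ R.natDegree ≤ Q.natDegree + 1 ∧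
      EndpointPeak R δ s C (c * (a / 2)) (a / 2) := by
  obtain ⟨R, hR, hR0, hdeg⟩ := Q.exists_derivative_eq (-1)
  have hmono : MonotoneOn (fun x => R.eval x) (Set.Icc (-1) 1) := by
    refine monotoneOn_of_deriv_nonneg (convex_Icc _ _) R.continuousOn
      R.differentiable.differentiableOn fun x hx => ?_
    rw [Polynomial.deriv, hR]
    exact h.nonneg x (interior_subset hx)
  have hnonneg : ∀ x ∈ Set.Icc (-1 : ℝ) 1, 0 ≤ R.eval x := fun x hx => by
    have := hmono (Set.left_mem_Icc.mpr (by norm_num)) hx hx.1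
    simpa [hR0] using this
  refine ⟨R, hR, hdeg, hnonneg, fun x hx => ?_, fun x hx => ?_⟩
  · have hd : ∀ y ∈ Set.Icc (-1 : ℝ) 1, HasDerivAt
        (fun y => C * ((1 - y + δ) ^ s)⁻¹ - R.eval y)
        (C * (s * (1 - y + δ) ^ (s - 1) / ((1 - y + δ) ^ s) ^ 2) - Q.eval y) y := by
      intro y hy
      have hw : 0 < 1 - y + δ := by linarith [hy.2]
      have h1 : HasDerivAt (fun y : ℝ => 1 - y + δ) (-1) y := by
        simpa using ((hasDerivAt_id y).const_sub 1).add_const δ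
      have h2 := (((h1.pow s).inv (pow_ne_zero _ hw.ne')).const_mul C).sub (R.hasDerivAt y)
      rw [hR] at h2
      exact h2.congr_deriv (by simp only [Pi.pow_apply]; ring)
    have hm : MonotoneOn (fun y => C * ((1 - y + δ) ^ s)⁻¹ - R.eval y) (Set.Icc (-1) 1) := by
      refine monotoneOn_of_deriv_nonneg (convex_Icc _ _)
        (fun y hy => (hd y hy).continuousAt.continuousWithinAt)
        (fun y hy => (hd y (interior_subset hy)).differentiableAt.differentiableWithinAt)
        fun y hy => ?_
      have hy := interior_subset hy
      rw [(hd y hy).deriv, sub_nonneg]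
      have hw : 0 < 1 - y + δ := by linarith [hy.2]
      have hs1 : (1 : ℝ) ≤ s := by exact_mod_cast hs
      have hq := h.upper y hy
      calc Q.eval y ≤ C / (1 - y + δ) ^ (s + 1) := by rwa [le_div_iff₀ (by positivity)]
        _ ≤ C * s / (1 - y + δ) ^ (s + 1) := by
            gcongr
            nlinarith
        _ = _ := by
            obtain ⟨t, rfl⟩ := Nat.exists_eq_add_of_le' hs
            rw [Nat.add_sub_cancel]
            field_simp
            ring
    have h3 := hm (Set.left_mem_Icc.mpr (by norm_num)) hx hx.1
    simp only [hR0] at h3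
    have hw : 0 < 1 - x + δ := by linarith [hx.2]
    have h4 : 0 ≤ C * ((1 - -1 + δ) ^ s)⁻¹ := by positivity
    rw [← le_div_iff₀ (by positivity), div_eq_mul_inv]
    linarith
  · have haδ : a * δ ≤ 1 := by nlinarith
    have haδ0 : 0 < a * δ := by positivity
    have hsub : Set.Icc (1 - a * δ) 1 ⊆ Set.Icc (-1 : ℝ) 1 :=
      Set.Icc_subset_Icc_left (by linarith)
    have hx' : x ∈ Set.Icc (1 - a * δ) 1 := ⟨by linarith [hx.1], hx.2⟩
    have hl : 1 - a * δ ∈ Set.Icc (1 - a * δ) 1 := Set.left_mem_Icc.mpr (by linarith)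
    have key := (convex_Icc (1 - a * δ) 1).mul_sub_le_image_sub_of_le_deriv
      (f := fun x => R.eval x) (C := c / δ ^ (s + 1)) R.continuousOn
      R.differentiable.differentiableOn (fun y hy => by
        rw [Polynomial.deriv, hR, div_le_iff₀ (by positivity), mul_comm]
        exact h.lower y (interior_subset hy)) _ hl _ hx' hx'.1
    have h0 := hnonneg _ (hsub hl)
    have hge : a / 2 * δ ≤ x - (1 - a * δ) := by linarith [hx.1]
    calc c * (a / 2) = δ ^ s * (c / δ ^ (s + 1) * (a / 2 * δ)) := by
          field_simp
          ring
      _ ≤ δ ^ s * (c / δ ^ (s + 1) * (x - (1 - a * δ))) := by gcongr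
      _ ≤ δ ^ s * R.eval x := by
          gcongr
          linarith

/-- A peak of order `s + k` is the `k`-th derivative of a polynomial all of whose derivatives up
to order `k` are peaks, with constants independent of the width `δ`. -/
theorem EndpointPeak.exists_iterated_antiderivative (k : ℕ) (C : ℝ) (hC : 0 ≤ C) (c a : ℝ)
    (hc : 0 < c) (ha : 0 < a) (ha1 : a ≤ 1) (s : ℕ) (hs : 1 ≤ s) :
    ∃ c' a' : ℝ, 0 < c' ∧ 0 < a' ∧ a' ≤ 1 ∧ ∀ (δ : ℝ) (Q : ℝ[X]), 0 < δ → δ ≤ 1 →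
      EndpointPeak Q δ (s + k) C c a →
      ∃ P : ℝ[X], P.natDegree ≤ Q.natDegree + k ∧
        ∀ j ≤ k, EndpointPeak (derivative^[j] P) δ (s + j) C c' a' := by
  induction k generalizing s with
  | zero =>
    refine ⟨c, a, hc, ha, ha1, fun δ Q _ _ hQ => ⟨Q, le_rfl, fun j hj => ?_⟩⟩
    obtain rfl : j = 0 := by omega
    exact hQ
  | succ k ih =>
    obtain ⟨c', a', hc', ha', ha1', H⟩ := ih (s + 1) (by omega)
    refine ⟨c' * (a' / 2), a' / 2, by positivity, by positivity, by linarith,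
      fun δ Q hδ hδ1 hQ => ?_⟩
    obtain ⟨P₁, hdeg, hP₁⟩ := H δ Q hδ hδ1 (by rwa [add_right_comm, add_assoc])
    obtain ⟨P, hP, hdegP, hpeak⟩ :=
      (hP₁ 0 (by omega)).exists_antiderivative hs hδ hδ1 hC hc'.le ha' ha1'
    refine ⟨P, by simp only [Function.iterate_zero, id] at hdegP; omega, fun j hj => ?_⟩
    cases j with
    | zero => exact hpeak
    | succ j =>
      rw [Function.iterate_succ_apply, hP, ← Function.iterate_add_apply, Nat.add_zero,
        show s + (j + 1) = s + 1 + j by ring]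
      exact (hP₁ j (by omega)).mono hδ (by nlinarith) (by linarith)

/-- The Chebyshev polynomial of the second kind of degree `j` is bounded by `j + 1` on `[-1,1]`. -/
theorem Polynomial.Chebyshev.abs_eval_U_real_le (j : ℕ) {x : ℝ} (hx : |x| ≤ 1) :
    |(Chebyshev.U ℝ j).eval x| ≤ j + 1 := by
  induction j with
  | zero => simp
  | succ j ih =>
    have hU : (Chebyshev.U ℝ ((j + 1 : ℕ) : ℤ)).eval x =
        x * (Chebyshev.U ℝ j).eval x + (Chebyshev.T ℝ (j + 1)).eval x := by
      have := congrArg (eval x) (Chebyshev.U_eq_X_mul_U_add_T ℝ j)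
      simpa using this
    have hT := Chebyshev.abs_eval_T_real_le_one (j + 1) hx
    rw [hU]
    calc _ ≤ |x| * |(Chebyshev.U ℝ j).eval x| + |(Chebyshev.T ℝ (j + 1)).eval x| := by
          rw [← abs_mul]
          exact abs_add_le _ _
      _ ≤ 1 * (j + 1) + 1 := by gcongr
      _ = _ := by push_cast; ring

/-- Near the endpoint `1`, the Chebyshev polynomial of the second kind of degree `j` is comparable
to `j + 1`. -/
theorem Polynomial.Chebyshev.le_eval_U_real (j : ℕ) {x : ℝ} (hx1 : x ≤ 1)
    (hx : 1 - 1 / (2 * ((j : ℝ) + 1) ^ 2) ≤ x) :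
    ((j : ℝ) + 1) / 2 ≤ (Chebyshev.U ℝ j).eval x := by
  have hpi := Real.pi_pos
  rcases hx1.eq_or_lt with rfl | hlt
  · rw [Chebyshev.U_eval_one]
    push_cast
    have : (0 : ℝ) ≤ j := by positivity
    linarith
  have hm : (1 : ℝ) ≤ j + 1 := by simp
  have hx0 : 0 < x := by
    have : 1 / (2 * ((j : ℝ) + 1) ^ 2) ≤ 1 / 2 := by
      apply one_div_le_one_div_of_le (by norm_num)
      nlinarith
    linarith
  set θ := Real.arccos x
  have hcos : Real.cos θ = x := Real.cos_arccos (by linarith) hx1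
  have hθ0 : 0 < θ := Real.arccos_pos.mpr hlt
  have hθpi : θ < Real.pi := by
    have := Real.arccos_lt_pi_div_two.mpr hx0
    linarith
  have hquad : Real.cos θ ≤ 1 - 2 / Real.pi ^ 2 * θ ^ 2 :=
    Real.cos_le_one_sub_mul_cos_sq (by rw [abs_of_pos hθ0]; exact hθpi.le)
  have hmθ : ((j : ℝ) + 1) * θ ≤ Real.pi / 2 := by
    refine abs_le_of_sq_le_sq' ?_ (by positivity) |>.2
    rw [hcos] at hquad
    have h1 : 2 / Real.pi ^ 2 * θ ^ 2 ≤ 1 / (2 * ((j : ℝ) + 1) ^ 2) := by linarith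
    rw [div_mul_eq_mul_div, div_le_div_iff₀ (by positivity) (by positivity)] at h1
    nlinarith
  have hsin : 0 < Real.sin θ := Real.sin_pos_of_pos_of_lt_pi hθ0 hθpi
  have hU := Chebyshev.U_real_cos θ j
  rw [hcos] at hU
  have h2 := Real.mul_le_sin (x := ((j : ℝ) + 1) * θ) (by positivity) hmθ
  have h3 : (1 : ℝ) / 2 ≤ 2 / Real.pi := by
    rw [div_le_div_iff₀ (by norm_num) hpi]
    linarith [Real.pi_le_four]
  refine le_of_mul_le_mul_right ?_ hsin
  rw [hU]
  push_cast
  calc ((j : ℝ) + 1) / 2 * Real.sin θ ≤ ((j : ℝ) + 1) / 2 * θ := by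
        gcongr
        exact Real.sin_le hθ0.le
    _ = 1 / 2 * (((j : ℝ) + 1) * θ) := by ring
    _ ≤ 2 / Real.pi * (((j : ℝ) + 1) * θ) := by gcongr
    _ ≤ _ := h2

/-- Powers of the Fejér-type kernel `(1 + x) U_j(x)²` are peaks of width `(j + 1)⁻²`. -/
theorem endpointPeak_chebyshev_kernel (j M : ℕ) :
    EndpointPeak (((1 + X) * Chebyshev.U ℝ j ^ 2) ^ M) ((((j : ℝ) + 1) ^ 2)⁻¹) M (3 ^ M)
      ((1 / 8) ^ M) (1 / 2) := by
  have hm : (1 : ℝ) ≤ j + 1 := by simp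
  refine ⟨fun x hx => ?_, fun x hx => ?_, fun x hx => ?_⟩
  · have : 0 ≤ 1 + x := by linarith [hx.1]
    simp only [eval_pow, eval_mul, eval_add, eval_one, eval_X]
    positivity
  · have h1x : 0 ≤ 1 + x := by linarith [hx.1]
    have h1x' : 0 ≤ 1 - x := by linarith [hx.2]
    simp only [eval_pow, eval_mul, eval_add, eval_one, eval_X]
    rw [← mul_pow]
    refine pow_le_pow_left₀ (by positivity) ?_ M
    have hU := Chebyshev.U_real_cos (Real.arccos x) j
    rw [Real.cos_arccos hx.1 hx.2] at hU
    have hs : (1 + x) * (1 - x) = Real.sin (Real.arccos x) ^ 2 := by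
      rw [Real.sin_sq, Real.cos_arccos hx.1 hx.2]
      ring
    have hA : (1 + x) * (Chebyshev.U ℝ j).eval x ^ 2 * (1 - x) ≤ 1 := by
      calc _ = ((1 + x) * (1 - x)) * (Chebyshev.U ℝ j).eval x ^ 2 := by ring
        _ = Real.sin (((j : ℤ) + 1) * Real.arccos x) ^ 2 := by rw [hs, ← hU]; ring
        _ ≤ 1 := Real.sin_sq_le_one _
    have hUb : (Chebyshev.U ℝ j).eval x ^ 2 ≤ ((j : ℝ) + 1) ^ 2 :=
      sq_le_sq' (abs_le.mp (Chebyshev.abs_eval_U_real_le j (abs_le.mpr hx))).1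
        (abs_le.mp (Chebyshev.abs_eval_U_real_le j (abs_le.mpr hx))).2
    have hB : (1 + x) * (Chebyshev.U ℝ j).eval x ^ 2 * (((j : ℝ) + 1) ^ 2)⁻¹ ≤ 2 := by
      rw [← div_eq_mul_inv, div_le_iff₀ (by positivity)]
      exact mul_le_mul (by linarith [hx.2]) hUb (by positivity) (by norm_num)
    linarith
  · simp only [eval_pow, eval_mul, eval_add, eval_one, eval_X]
    rw [← mul_pow]
    refine pow_le_pow_left₀ (by norm_num) ?_ M
    have hδ1 : (((j : ℝ) + 1) ^ 2)⁻¹ ≤ 1 := inv_le_one_of_one_le₀ (by nlinarith)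
    have hx2 : 1 / 2 ≤ 1 + x := by linarith [hx.1]
    have hU := Chebyshev.le_eval_U_real j hx.2 (le_trans (le_of_eq (by field_simp)) hx.1)
    calc (1 : ℝ) / 8 = (((j : ℝ) + 1) ^ 2)⁻¹ * (1 / 2 * (((j : ℝ) + 1) / 2) ^ 2) := by
          field_simp
          norm_num
      _ ≤ _ := by gcongr

theorem integral_rpow_neg_le {δ r : ℝ} (hδ : 0 < δ) (hr : 2 ≤ r) :
    ∫ x in (-1 : ℝ)..1, (1 - x + δ) ^ (-r) ≤ δ ^ (1 - r) := by
  have h0 : ∫ x in (-1 : ℝ)..1, (1 - x + δ) ^ (-r) = ∫ y in δ..(2 + δ), y ^ (-r) := by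
    have := intervalIntegral.integral_comp_sub_left (a := -1) (b := 1)
      (fun y : ℝ => y ^ (-r)) (1 + δ)
    rw [show 1 + δ - 1 = δ by ring, show 1 + δ - -1 = 2 + δ by ring] at this
    rw [← this]
    congr 1 with x
    congr 1
    ring
  rw [h0, integral_rpow (Or.inr ⟨by linarith, ?_⟩), show -r + 1 = 1 - r by ring]
  · have h1 : 0 ≤ (2 + δ) ^ (1 - r) := by positivity
    have h2 : 0 ≤ δ ^ (1 - r) := by positivity
    rw [← neg_div_neg_eq, div_le_iff₀ (by linarith)]
    nlinarith
  · rw [Set.uIcc_of_le (by linarith)]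
    exact fun h => absurd h.1 (not_le.mpr hδ)

theorem intervalIntegrable_abs_eval_rpow (P : ℝ[X]) {p : ℝ} (hp : 0 ≤ p) (a b : ℝ) :
    IntervalIntegrable (fun x => |P.eval x| ^ p) volume a b :=
  (P.continuous.abs.rpow_const fun _ => Or.inr hp).intervalIntegrable _ _

/-- The `L_p` norm of a peak of order `s` with `s p ≥ 2` is at most `C δ^(1/p - s)`. -/
theorem EndpointPeak.LqNorm_le {P : ℝ[X]} {δ : ℝ} {s : ℕ} {C c a p : ℝ}
    (h : EndpointPeak P δ s C c a) (hp : 0 < p) (hs : 2 ≤ s * p) (hδ : 0 < δ) (hC : 0 ≤ C) :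
    LqNorm (fun x => P.eval x) p (-1) 1 ≤ C * δ ^ (1 / p - s) := by
  have hpt : ∀ x ∈ Set.Icc (-1 : ℝ) 1,
      |P.eval x| ^ p ≤ C ^ p * (1 - x + δ) ^ (-(s * p)) := by
    intro x hx
    have hw : 0 < 1 - x + δ := by linarith [hx.2]
    rw [abs_of_nonneg (h.nonneg x hx), Real.rpow_neg hw.le, Real.rpow_mul hw.le,
      Real.rpow_natCast, ← div_eq_mul_inv, ← Real.div_rpow hC (by positivity)]
    refine Real.rpow_le_rpow (h.nonneg x hx) ?_ hp.le
    rw [le_div_iff₀ (by positivity)]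
    exact h.upper x hx
  have hint : IntervalIntegrable (fun x => C ^ p * (1 - x + δ) ^ (-(s * p))) volume (-1) 1 := by
    refine ContinuousOn.intervalIntegrable ?_
    rw [Set.uIcc_of_le (by norm_num)]
    refine continuousOn_const.mul (ContinuousOn.rpow_const (by fun_prop) fun x hx => Or.inl ?_)
    have : 0 < 1 - x + δ := by linarith [hx.2]
    exact this.ne'
  have hI : ∫ x in (-1 : ℝ)..1, |P.eval x| ^ p ≤ C ^ p * δ ^ (1 - s * p) := by
    refine (intervalIntegral.integral_mono_on (by norm_num)
      (intervalIntegrable_abs_eval_rpow P hp.le _ _) hint hpt).trans ?_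
    rw [intervalIntegral.integral_const_mul]
    gcongr
    exact integral_rpow_neg_le hδ hs
  have hI0 : 0 ≤ ∫ x in (-1 : ℝ)..1, |P.eval x| ^ p :=
    intervalIntegral.integral_nonneg (by norm_num) fun x _ => by positivity
  refine (Real.rpow_le_rpow hI0 hI (by positivity)).trans (le_of_eq ?_)
  rw [Real.mul_rpow (by positivity) (by positivity), ← Real.rpow_mul hC, ← Real.rpow_mul hδ.le,
    mul_one_div_cancel hp.ne', Real.rpow_one]
  congr 2
  field_simp

/-- A polynomial that is at least `L` on `[1 - h, 1]` has `L_q` norm at least `L h^(1/q)`. -/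
theorem le_LqNorm {P : ℝ[X]} {q L h : ℝ} (hq : 0 < q) (hL : 0 ≤ L) (hh : 0 ≤ h) (hh2 : h ≤ 2)
    (hP : ∀ x ∈ Set.Icc (1 - h) 1, L ≤ P.eval x) :
    L * h ^ (1 / q) ≤ LqNorm (fun x => P.eval x) q (-1) 1 := by
  have hI : L ^ q * h ≤ ∫ x in (-1 : ℝ)..1, |P.eval x| ^ q := by
    calc L ^ q * h = ∫ _ in (1 - h)..1, L ^ q := by
          rw [intervalIntegral.integral_const, smul_eq_mul]
          ring
      _ ≤ ∫ x in (1 - h)..1, |P.eval x| ^ q :=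
          intervalIntegral.integral_mono_on (by linarith) (by simp)
            (intervalIntegrable_abs_eval_rpow P hq.le _ _) fun x hx =>
            Real.rpow_le_rpow hL ((hP x hx).trans (le_abs_self _)) hq.le
      _ ≤ _ := intervalIntegral.integral_mono_interval (by linarith) (by linarith) le_rfl
          (ae_of_all _ fun x => by positivity) (intervalIntegrable_abs_eval_rpow P hq.le _ _)
  refine le_trans (le_of_eq ?_) (Real.rpow_le_rpow (by positivity) hI (by positivity))
  rw [Real.mul_rpow (by positivity) hh, ← Real.rpow_mul hL, mul_one_div_cancel hq.ne',
    Real.rpow_one]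

theorem le_Lnorm {P : ℝ[X]} {q : ENNReal} {L h : ℝ} (hq : 0 < q) (hL : 0 ≤ L) (hh : 0 ≤ h)
    (hh2 : h ≤ 2) (hP : ∀ x ∈ Set.Icc (1 - h) 1, L ≤ P.eval x) :
    L * h ^ (1 / q.toReal) ≤ Lnorm (fun x => P.eval x) q (-1) 1 := by
  unfold Lnorm
  split_ifs with hqt
  · have h1 := hP 1 (Set.right_mem_Icc.mpr (by linarith))
    have hb : BddAbove ((fun x => |P.eval x|) '' Set.Icc (-1) 1) :=
      (isCompact_Icc.image P.continuous.abs).bddAbove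
    have := le_csSup hb (Set.mem_image_of_mem _ (Set.right_mem_Icc.mpr (by norm_num)))
    simp only [hqt, ENNReal.toReal_top, div_zero, Real.rpow_zero, mul_one]
    exact (h1.trans (le_abs_self _)).trans this
  · exact le_LqNorm (ENNReal.toReal_pos hq.ne' hqt) hL hh hh2 hP

/-- Lower bound in the case `l > 1/q - 1/p` (here `0 < q ≤ ∞`,
with the convention `1/∞ = 0`). -/
theorem stmt7 (p : ℝ) (hp : 0 < p) (q : ENNReal) (hq : 0 < q) (k l : ℕ) (hlk : l ≤ k)
    (hl : (1 / q.toReal - 1 / p : ℝ) < (l : ℝ)) :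
    ∃ c : ℝ, 0 < c ∧ ∃ N : ℕ, ∀ n : ℕ, N ≤ n → ∃ P : Polynomial ℝ, AbsMono P n k ∧
      0 < LqNorm (fun x => P.eval x) p (-1) 1 ∧
      c * (n : ℝ) ^ (2 * (l : ℝ) + 2 / p - 2 / q.toReal) *
          LqNorm (fun x => P.eval x) p (-1) 1 ≤
        Lnorm (fun x => (derivative^[l] P).eval x) q (-1) 1 := by
  set r := 1 / q.toReal with hr
  obtain ⟨s, hs⟩ := exists_nat_ge (2 / p + 1)
  have hsp : 2 ≤ s * p := by
    rw [← div_le_iff₀ hp]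
    linarith
  have hs1 : 1 ≤ s := by
    have : (0 : ℝ) < 2 / p := by positivity
    exact_mod_cast (show (1 : ℝ) ≤ s by linarith)
  set M := s + k with hM
  have hM1 : 1 ≤ M := by omega
  have hMr : (1 : ℝ) ≤ M := by exact_mod_cast hM1
  obtain ⟨c, a, hc, ha, ha1, H⟩ := EndpointPeak.exists_iterated_antiderivative k (3 ^ M)
    (by positivity) ((1 / 8) ^ M) (1 / 2) (by positivity) (by norm_num) (by norm_num) s hs1
  set e := 2 * (l : ℝ) + 2 / p - 2 / q.toReal with he
  have he' : e = 2 * (l + 1 / p - r) := by rw [he, hr]; ring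
  have he0 : 0 < e := by rw [he']; linarith
  refine ⟨c * a ^ r / 3 ^ M / (4 * M) ^ e, by positivity, 2 * M, fun n hn => ?_⟩
  obtain ⟨j, hj⟩ : ∃ j, n / (2 * M) = j + 1 :=
    Nat.exists_eq_add_of_le' ((Nat.one_le_div_iff (by omega)).mpr hn)
  have hjn : 2 * M * (j + 1) ≤ n := hj ▸ Nat.mul_div_le n (2 * M)
  have hnj : n < 2 * M * (j + 1 + 1) := hj ▸ Nat.lt_mul_div_succ n (by omega)
  have hm : (1 : ℝ) ≤ j + 1 := by simp
  have hnm : (n : ℝ) ≤ 4 * M * (j + 1) := by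
    have : (n : ℝ) < 2 * M * (j + 1 + 1) := by exact_mod_cast hnj
    nlinarith
  set δ : ℝ := (((j : ℝ) + 1) ^ 2)⁻¹ with hδ
  have hδ0 : 0 < δ := by positivity
  have hδ1 : δ ≤ 1 := inv_le_one_of_one_le₀ (by nlinarith)
  obtain ⟨P, hdeg, hP⟩ := H δ _ hδ0 hδ1 (endpointPeak_chebyshev_kernel j M)
  have haδ : a * δ ≤ 2 := by nlinarith
  have hlow : ∀ i ≤ k, ∀ x ∈ Set.Icc (1 - a * δ) 1, c / δ ^ (s + i) ≤ (derivative^[i] P).eval x :=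
    fun i hi x hx => by
      rw [div_le_iff₀' (by positivity)]
      exact (hP i hi).lower x hx
  have hdegQ : (((1 + X) * Chebyshev.U ℝ j ^ 2) ^ M : ℝ[X]).natDegree ≤ M * (1 + 2 * j) := by
    refine natDegree_pow_le_of_le M (natDegree_mul_le_of_le ?_ (natDegree_pow_le_of_le 2 ?_))
    · exact natDegree_add_le_of_degree_le (by simp) natDegree_X_le
    · rw [Chebyshev.natDegree_U_natCast]
  have hpos : 0 < LqNorm (fun x => P.eval x) p (-1) 1 :=
    lt_of_lt_of_le (by positivity)
      (le_LqNorm hp (by positivity) (by positivity) haδ (hlow 0 (by omega)))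
  refine ⟨P, ⟨?_, fun i hi => (hP i hi).nonneg⟩, hpos, ?_⟩
  · have : M * (1 + 2 * j) + M = 2 * M * (j + 1) := by ring
    omega
  · refine le_trans ?_ (le_Lnorm hq (by positivity) (by positivity) haδ (hlow l hlk))
    have hup := (hP 0 (by omega)).LqNorm_le hp (by simpa using hsp) hδ0 (by positivity)
    simp only [Function.iterate_zero, id, Nat.add_zero] at hup
    have hδe : δ ^ (r - 1 / p - l) = ((j : ℝ) + 1) ^ e := by
      rw [hδ, Real.inv_rpow (by positivity), ← Real.rpow_neg (by positivity),
        ← Real.rpow_natCast, ← Real.rpow_mul (by positivity), he']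
      congr 1
      push_cast
      ring
    have hne : (n : ℝ) ^ e ≤ (4 * M) ^ e * ((j : ℝ) + 1) ^ e := by
      rw [← Real.mul_rpow (by positivity) (by positivity)]
      gcongr
    calc c * a ^ r / 3 ^ M / (4 * M) ^ e * (n : ℝ) ^ e * LqNorm (fun x => P.eval x) p (-1) 1
        ≤ c * a ^ r / 3 ^ M / (4 * M) ^ e * ((4 * M) ^ e * ((j : ℝ) + 1) ^ e) *
          (3 ^ M * δ ^ (1 / p - s)) := by
          gcongr
      _ = c * a ^ r * (δ ^ (r - 1 / p - l) * δ ^ (1 / p - s)) := by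
          rw [hδe]
          field_simp
      _ = c / δ ^ (s + l) * (a * δ) ^ r := by
          rw [← Real.rpow_add hδ0, Real.mul_rpow ha.le hδ0.le, ← Real.rpow_natCast δ (s + l),
            show r - 1 / p - l + (1 / p - s) = r - ((s + l : ℕ) : ℝ) by push_cast; ring,
            Real.rpow_sub hδ0]
          ring
end
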